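/- arXiv:1705.00836 — 2 statements merged into one kernel-verified Lean document; each statement's English description precedes it below -/
import Mathlib

section
/- (Schönberg–Whitney) Let n_1 < n_2 < ··· < n_r be integers and t_1 < t_2 < ··· < t_r be real numbers. The r×r matrix [φ_m(t_i − n_j)]_{1≤i,j≤r} is invertible if and only if φ_m(t_i − n_i) ≠ 0 for every i = 1, …, r. -/
/-!
Everything except degree `0` rests on the fact that the collocation matrix is totally nonnegative,
which is read off from the two-scale relation
`φ_m(x) = 2⁻ᵐ ∑ₖ (m+1 choose k) φ_m(2x - k)`, valid for all `x` when `m ≥ 1` (`refinement`).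
Up to the factor `2⁻ᵐ`, it expresses the row `k ↦ φ_m(x - k)` as the even-indexed part of the row `k ↦ φ_m(2x - k)` after
`m + 1` additions of each column to its left neighbour. By multilinearity of the determinant, one
such addition turns a minor into the sum of the minors obtained by moving some of its columns one
step to the right (`minor_colStep`); this preserves the order of the columns up to ties, and ties
contribute zero. Hence nonnegativity of all minors passes from the nodes `2x` to the nodes `x`.
After enough doublings the nodes are further apart than the length of the support, and then only
the identity permutation contributes to a minor, which is a product of nonnegative numbers.

For strict positivity when `nᵢ < tᵢ < nᵢ + m + 1` it is enough to follow one summand through each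
doubling. This asks for increasing fine columns `kᵢ` with `2nᵢ ≤ kᵢ ≤ 2nᵢ + m + 1` and
`kᵢ < 2tᵢ < kᵢ + m + 1` (`exists_fine_columns`), joined to `2nᵢ` by `m + 1` moves that never
make two columns collide (`minor_iterate_pos`).

Conversely, if `tᵢ` lies outside the open support of the `i`-th spline, monotonicity produces an
`i × (r - i + 1)` (or transposed) block of zeros, too large for a nonzero determinant. For `m = 0`
the matrix has no two nonzero entries in the positions of an inversion, and its determinant is the
product of its diagonal.
-/

open MeasureTheory

/-- The degree-`m` B-spline: `(m+1)`-fold convolution of the indicator of `[0,1]`. -/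
noncomputable def bspline : ℕ → ℝ → ℝ
  | 0 => Set.indicator (Set.Icc (0 : ℝ) 1) (fun _ => 1)
  | m + 1 => fun x => ∫ t in (0 : ℝ)..1, bspline m (x - t)

/-! ### Basic properties of B-splines -/

lemma bspline_succ_eq (m : ℕ) (x : ℝ) :
    bspline (m + 1) x = ∫ u in (x - 1)..x, bspline m u := by
  change (∫ t in (0 : ℝ)..1, bspline m (x - t)) = _
  rw [intervalIntegral.integral_comp_sub_left (fun u => bspline m u) x]
  simp

lemma bspline_zero_integrable (a b : ℝ) : IntervalIntegrable (bspline 0) volume a b := by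
  have h : Integrable (bspline 0) volume := by
    change Integrable (Set.indicator (Set.Icc (0 : ℝ) 1) (fun _ => (1 : ℝ))) volume
    rw [integrable_indicator_iff measurableSet_Icc]
    exact integrableOn_const (by simp)
  exact h.intervalIntegrable

lemma continuous_window {f : ℝ → ℝ} (hf : ∀ a b, IntervalIntegrable f volume a b) :
    Continuous fun x => ∫ u in (x - 1)..x, f u := by
  have h := intervalIntegral.continuous_primitive hf 0
  have e : (fun x => ∫ u in (x - 1)..x, f u)
      = fun x => (∫ u in (0 : ℝ)..x, f u) - ∫ u in (0 : ℝ)..(x - 1), f u := by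
    funext x
    rw [intervalIntegral.integral_interval_sub_left (hf _ _) (hf _ _)]
  rw [e]
  exact h.sub (h.comp (continuous_id.sub continuous_const))

lemma bspline_intervalIntegrable (m : ℕ) (a b : ℝ) :
    IntervalIntegrable (bspline m) volume a b := by
  induction m generalizing a b with
  | zero => exact bspline_zero_integrable a b
  | succ m ih =>
    have : Continuous (bspline (m + 1)) := by
      rw [funext (bspline_succ_eq m)]
      exact continuous_window ih
    exact this.intervalIntegrable a b

lemma bspline_nonneg (m : ℕ) (x : ℝ) : 0 ≤ bspline m x := by
  induction m generalizing x with
  | zero => exact Set.indicator_nonneg (fun _ _ => zero_le_one) x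
  | succ m ih =>
    rw [bspline_succ_eq]
    exact intervalIntegral.integral_nonneg (by linarith) fun u _ => ih u

/-- The closed interval is optimal only for `m = 0`; see `bspline_succ_ne_zero`. -/
lemma bspline_support (m : ℕ) (x : ℝ) (h : bspline m x ≠ 0) : 0 ≤ x ∧ x ≤ m + 1 := by
  induction m generalizing x with
  | zero =>
    have : x ∈ Set.Icc (0 : ℝ) 1 := Set.mem_of_indicator_ne_zero h
    simpa using this
  | succ m ih =>
    by_contra hx
    apply h
    rw [bspline_succ_eq]
    apply intervalIntegral.integral_zero_ae
    refine Filter.Eventually.of_forall fun u hu => ?_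
    rw [Set.uIoc_of_le (by linarith)] at hu
    by_contra hne
    have := ih u hne
    push_cast at hx
    exact hx ⟨by linarith [hu.2], by linarith [hu.1]⟩

lemma bspline_pos (m : ℕ) (x : ℝ) (h0 : 0 < x) (h1 : x < m + 1) : 0 < bspline m x := by
  induction m generalizing x with
  | zero =>
    have : x ∈ Set.Icc (0 : ℝ) 1 := ⟨h0.le, by simpa using h1.le⟩
    change 0 < Set.indicator (Set.Icc (0 : ℝ) 1) (fun _ => (1 : ℝ)) x
    rw [Set.indicator_of_mem this]
    exact one_pos
  | succ m ih =>
    push_cast at h1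
    rw [bspline_succ_eq]
    have hab : max (x - 1) 0 < min x (m + 1) := by
      have : (0 : ℝ) ≤ m := m.cast_nonneg
      rw [max_lt_iff, lt_min_iff, lt_min_iff]
      exact ⟨⟨by linarith, by linarith⟩, h0, by linarith⟩
    have hpos : 0 < ∫ u in (max (x - 1) 0)..(min x (m + 1)), bspline m u := by
      refine intervalIntegral.intervalIntegral_pos_of_pos_on
        (bspline_intervalIntegrable m _ _) (fun u hu => ?_) hab
      exact ih u ((le_max_right _ _).trans_lt hu.1) (hu.2.trans_le (min_le_right _ _))
    refine hpos.trans_le ?_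
    exact intervalIntegral.integral_mono_interval (le_max_left _ _) hab.le (min_le_left _ _)
      (Filter.Eventually.of_forall fun u => bspline_nonneg m u)
      (bspline_intervalIntegrable m _ _)

lemma bspline_succ_ne_zero (m : ℕ) (x : ℝ) :
    bspline (m + 1) x ≠ 0 ↔ 0 < x ∧ x < (m + 1 : ℕ) + 1 := by
  constructor
  · intro h
    by_contra hx
    apply h
    rw [bspline_succ_eq]
    have hab : x - 1 ≤ x := by linarith
    rw [intervalIntegral.integral_of_le hab, integral_Ioc_eq_integral_Ioo]
    refine setIntegral_eq_zero_of_forall_eq_zero fun u hu => ?_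
    by_contra hne
    have := bspline_support m u hne
    push_cast at hx
    exact hx ⟨by linarith [hu.2], by linarith [hu.1]⟩
  · rintro ⟨h0, h1⟩
    exact (bspline_pos _ _ h0 h1).ne.symm

/-! ### The two-scale relation -/

/-- Convolution with the two-point mask `δ₀ + δ₁`. -/
def maskStep (f : ℝ → ℝ) (x : ℝ) : ℝ := f x + f (x - 1)

lemma maskStep_iterate_integrable (l : ℕ) {f : ℝ → ℝ}
    (hf : ∀ a b, IntervalIntegrable f volume a b) (a b : ℝ) :
    IntervalIntegrable (maskStep^[l] f) volume a b := by
  induction l generalizing f with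
  | zero => exact hf a b
  | succ l ih =>
    rw [Function.iterate_succ_apply]
    refine ih fun a b => (hf a b).add ?_
    simpa using (hf (a - 1) (b - 1)).comp_sub_right 1

lemma window_maskStep_iterate (l : ℕ) {f : ℝ → ℝ}
    (hf : ∀ a b, IntervalIntegrable f volume a b) :
    (fun x => ∫ u in (x - 1)..x, (maskStep^[l] f) u)
      = maskStep^[l] fun x => ∫ u in (x - 1)..x, f u := by
  induction l with
  | zero => rfl
  | succ l ih =>
    rw [Function.iterate_succ_apply', Function.iterate_succ_apply', ← ih]
    funext x
    have h := maskStep_iterate_integrable l hf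
    have h' : IntervalIntegrable (fun u => (maskStep^[l] f) (u - 1)) volume (x - 1) x := by
      simpa using (h (x - 1 - 1) (x - 1)).comp_sub_right 1
    simp only [maskStep]
    rw [intervalIntegral.integral_add (h _ _) h',
      intervalIntegral.integral_comp_sub_right (fun u => (maskStep^[l] f) u) 1]

/-- If the two-scale relation of degree `m` holds almost everywhere, that of degree `m + 1`
holds everywhere, because both sides of the latter are integrals of the former. -/
lemma refinement_step (m : ℕ)
    (h : ∀ᵐ x : ℝ, bspline m x = (2 ^ m)⁻¹ * (maskStep^[m + 1] (bspline m)) (2 * x)) (x : ℝ) :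
    bspline (m + 1) x
      = (2 ^ (m + 1))⁻¹ * (maskStep^[m + 1 + 1] (bspline (m + 1))) (2 * x) := by
  have hi := maskStep_iterate_integrable (m + 1) (bspline_intervalIntegrable m)
  rw [bspline_succ_eq, intervalIntegral.integral_congr_ae (h.mono fun u hu _ => hu),
    intervalIntegral.integral_const_mul,
    intervalIntegral.integral_comp_mul_left _ (two_ne_zero),
    Function.iterate_succ_apply' maskStep (m + 1), funext (bspline_succ_eq m),
    ← window_maskStep_iterate (m + 1) (bspline_intervalIntegrable m)]
  simp only [maskStep]
  rw [add_comm (∫ u in (2 * x - 1)..(2 * x), _),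
    intervalIntegral.integral_add_adjacent_intervals (hi _ _) (hi _ _), pow_succ, mul_inv,
    smul_eq_mul, show 2 * (x - 1) = 2 * x - 1 - 1 by ring]
  ring

lemma refinement_zero_ae :
    ∀ᵐ x : ℝ, bspline 0 x = (2 ^ 0)⁻¹ * (maskStep^[0 + 1] (bspline 0)) (2 * x) := by
  -- at `x = 1 / 2` the two closed half-intervals overlap
  have hx : ∀ᵐ x : ℝ, x ≠ 1 / 2 := by
    simp [ae_iff]
  filter_upwards [hx] with x hx
  simp only [zero_add, Function.iterate_one, maskStep, bspline, Set.indicator_apply,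
    Set.mem_Icc, pow_zero, inv_one, one_mul]
  rcases lt_or_gt_of_ne hx with hx | hx
  · rw [if_neg (c := 0 ≤ 2 * x - 1 ∧ _) (by intro h; linarith [h.1]), add_zero]
    refine if_congr ⟨fun h => ⟨by linarith [h.1], by linarith⟩,
      fun h => ⟨by linarith [h.1], by linarith⟩⟩ rfl rfl
  · rw [if_neg (c := 0 ≤ 2 * x ∧ _) (by intro h; linarith [h.2]), zero_add]
    refine if_congr ⟨fun h => ⟨by linarith, by linarith [h.2]⟩,
      fun h => ⟨by linarith, by linarith [h.2]⟩⟩ rfl rfl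

/-- The two-scale relation `φ_m(x) = 2⁻ᵐ ∑ₖ (m+1 choose k) φ_m(2x - k)`, with the binomial mask
written as an iterate. It fails for `m = 0` at `x = 1 / 2`. -/
lemma refinement (m : ℕ) (x : ℝ) :
    bspline (m + 1) x
      = (2 ^ (m + 1))⁻¹ * (maskStep^[m + 1 + 1] (bspline (m + 1))) (2 * x) := by
  induction m generalizing x with
  | zero => exact refinement_step 0 refinement_zero_ae x
  | succ m ih => exact refinement_step (m + 1) (Filter.Eventually.of_forall ih) x

/-! ### Determinants of sampled rows -/

/-- If no two nonzero entries of `A` are in north-east / south-west position, only the identity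
permutation contributes to the determinant. -/
lemma det_eq_prod_diag {r : ℕ} (A : Matrix (Fin r) (Fin r) ℝ)
    (h : ∀ i j a b, i < j → a < b → A i b ≠ 0 → A j a ≠ 0 → False) :
    A.det = ∏ i, A i i := by
  rw [Matrix.det_apply, Finset.sum_eq_single 1]
  · simp
  · intro σ _ hσ
    obtain ⟨i, j, hij, hσij⟩ : ∃ i j, i < j ∧ σ j < σ i := by
      by_contra! hc
      have hs : StrictMono σ := fun i j hij =>
        lt_of_le_of_ne (hc i j hij) fun e => hij.ne (σ.injective e)
      have : (⇑σ : Fin r → Fin r) = id := by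
        refine (StrictMono.range_inj hs strictMono_id).1 ?_
        rw [σ.surjective.range_eq, Set.range_id]
      exact hσ (Equiv.ext fun x => congrFun this x)
    have : ∏ k, A (σ k) k = 0 := by
      by_contra hp
      replace hp := Finset.prod_ne_zero_iff.1 hp
      exact h _ _ _ _ hσij hij (hp j (Finset.mem_univ _)) (hp i (Finset.mem_univ _))
    rw [this, smul_zero]
  · intro h1
    exact absurd (Finset.mem_univ _) h1

/-- The minor on all rows and the columns `n` of the `r × ℤ` matrix `G`. The
determinant is taken of the transpose, since multilinearity in Mathlib is stated for rows. -/
noncomputable def minor {r : ℕ} (G : Fin r → ℤ → ℝ) (n : Fin r → ℤ) : ℝ :=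
  Matrix.det (Matrix.of fun j i => G i (n j))

/-- Adding to each column of an `r × ℤ` matrix its right neighbour. -/
def colStep {r : ℕ} (G : Fin r → ℤ → ℝ) : Fin r → ℤ → ℝ := fun i k => G i k + G i (k + 1)

lemma minor_colStep {r : ℕ} (G : Fin r → ℤ → ℝ) (n : Fin r → ℤ) :
    minor (colStep G) n = ∑ s : Finset (Fin r), minor G fun j => if j ∈ s then n j else n j + 1 := by
  have h := (Matrix.detRowAlternating (R := ℝ) (n := Fin r)).toMultilinearMap.map_add_univ
    (fun j i => G i (n j)) (fun j i => G i (n j + 1))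
  refine Eq.trans (Eq.trans ?_ h) (Finset.sum_congr rfl fun s _ => ?_)
  · rfl
  · change Matrix.det _ = Matrix.det _
    congr 1
    ext j i
    by_cases hj : j ∈ s <;> simp [Finset.piecewise, hj]

/-- Nonnegativity of all maximal minors. -/
def NonnegMinors {r : ℕ} (G : Fin r → ℤ → ℝ) : Prop :=
  ∀ n : Fin r → ℤ, StrictMono n → 0 ≤ minor G n

/-- Moving some of the columns one step to the right keeps the order up to ties, and ties give a
vanishing minor. -/
lemma NonnegMinors.shift {r : ℕ} {G : Fin r → ℤ → ℝ} (hG : NonnegMinors G) {n : Fin r → ℤ}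
    (hn : StrictMono n) (s : Finset (Fin r)) :
    0 ≤ minor G fun j => if j ∈ s then n j else n j + 1 := by
  set n' : Fin r → ℤ := fun j => if j ∈ s then n j else n j + 1 with hn'
  by_cases hs : StrictMono n'
  · exact hG n' hs
  · obtain ⟨i, j, hij, hle⟩ : ∃ i j, i < j ∧ n' j ≤ n' i := by
      simpa [StrictMono] using hs
    have hlt := hn hij
    have he : n' i = n' j := by
      simp only [hn'] at hle ⊢
      split_ifs at hle ⊢ <;> omega
    refine le_of_eq (Matrix.det_zero_of_row_eq hij.ne ?_).symm
    funext k
    simp [he]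

lemma NonnegMinors.colStep {r : ℕ} {G : Fin r → ℤ → ℝ} (hG : NonnegMinors G) :
    NonnegMinors (colStep G) := by
  intro n hn
  rw [minor_colStep]
  exact Finset.sum_nonneg fun s _ => hG.shift hn s

lemma NonnegMinors.colStep_iterate {r : ℕ} {G : Fin r → ℤ → ℝ} (hG : NonnegMinors G) (l : ℕ) :
    NonnegMinors (_root_.colStep^[l] G) := by
  induction l with
  | zero => exact hG
  | succ l ih =>
    rw [Function.iterate_succ_apply']
    exact ih.colStep

/-- A minor of `colStep^[l] G` is positive if some minor of `G` is whose columns are reached from its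
own by at most `l` unit moves to the right. The order is kept along the way when each column moves
as late as possible. -/
lemma minor_iterate_pos {r : ℕ} {G : Fin r → ℤ → ℝ} (hG : NonnegMinors G) (l : ℕ)
    {n k : Fin r → ℤ} (hn : StrictMono n) (hk : StrictMono k) (h1 : ∀ i, n i ≤ k i)
    (h2 : ∀ i, k i ≤ n i + l) (hpos : 0 < minor G k) : 0 < minor (colStep^[l] G) n := by
  induction l generalizing n with
  | zero =>
    have : n = k := funext fun i => le_antisymm (h1 i) (by simpa using h2 i)
    simpa [this] using hpos
  | succ l ih =>
    rw [Function.iterate_succ_apply', minor_colStep]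
    refine Finset.sum_pos' (fun s _ => (hG.colStep_iterate l).shift hn s)
      ⟨Finset.univ.filter fun i => k i ≤ n i + l, Finset.mem_univ _, ?_⟩
    have e : (fun j => if j ∈ Finset.univ.filter (fun i => k i ≤ n i + l) then n j else n j + 1)
        = fun j => max (n j) (k j - l) := by
      funext j
      have := h2 j
      push_cast at this
      simp only [Finset.mem_filter, Finset.mem_univ, true_and]
      split_ifs <;> omega
    rw [e]
    refine ih (fun i j hij => ?_) (fun i => ?_) fun i => ?_
    · have := hn hij
      have := hk hij
      omega
    · have := h1 i
      omega
    · have := h2 i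
      omega

/-! ### Positivity of the collocation minors -/

/-- Rows of the collocation matrix, over all integer shifts. -/
noncomputable def rows {r : ℕ} (m : ℕ) (x : Fin r → ℝ) : Fin r → ℤ → ℝ :=
  fun i k => bspline m (x i - k)

lemma colStep_iterate_rows {r : ℕ} (f : ℝ → ℝ) (x : Fin r → ℝ) (l : ℕ) :
    colStep^[l] (fun i (k : ℤ) => f (x i - k)) = fun i (k : ℤ) => (maskStep^[l] f) (x i - k) := by
  induction l with
  | zero => rfl
  | succ l ih =>
    rw [Function.iterate_succ_apply', Function.iterate_succ_apply', ih]
    funext i k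
    simp only [colStep, maskStep]
    push_cast
    rw [sub_sub]

lemma minor_rows_refine {r : ℕ} (m : ℕ) (x : Fin r → ℝ) (n : Fin r → ℤ) :
    minor (rows (m + 1) x) n = ((2 ^ (m + 1))⁻¹) ^ r *
      minor (colStep^[m + 1 + 1] (rows (m + 1) fun i => 2 * x i)) fun j => 2 * n j := by
  unfold minor rows
  rw [colStep_iterate_rows]
  have := Matrix.det_smul (Matrix.of fun j i : Fin r =>
    (maskStep^[m + 1 + 1] (bspline (m + 1))) (2 * x i - ((2 * n j : ℤ) : ℝ)))
    ((2 ^ (m + 1))⁻¹ : ℝ)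
  rw [Fintype.card_fin] at this
  rw [← this]
  congr 1
  ext j i
  simp only [Matrix.of_apply, Matrix.smul_apply, smul_eq_mul]
  rw [refinement m]
  push_cast
  rw [mul_sub]

/-- The smallest increasing `k` with `kᵢ ≥ 2nᵢ` and `kᵢ > xᵢ - m - 1` is admissible. -/
lemma exists_fine_columns {r : ℕ} (m : ℕ) (hm : 1 ≤ m) {x : Fin r → ℝ} {n : Fin r → ℤ} (hx : StrictMono x)
    (hn : StrictMono n) (h0 : ∀ i, 2 * (n i : ℝ) < x i)
    (h1 : ∀ i, x i < 2 * (n i : ℝ) + 2 * m + 2) :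
    ∃ k : Fin r → ℤ, StrictMono k ∧ (∀ i, 2 * n i ≤ k i) ∧ (∀ i, k i ≤ 2 * n i + (m + 1 : ℕ)) ∧
      (∀ i, (k i : ℝ) < x i) ∧ ∀ i, x i < k i + m + 1 := by
  have hgap : ∀ i j : Fin r, j ≤ i → n j + ((i : ℤ) - j) ≤ n i := by
    have key : ∀ d : ℕ, ∀ i j : Fin r, (i : ℕ) = j + d → n j + d ≤ n i := by
      intro d
      induction d with
      | zero =>
        intro i j e
        have : i = j := Fin.ext (by simpa using e)
        simp [this]
      | succ d ih =>
        intro i j e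
        have hlt : (j : ℕ) + d < r := by omega
        have a := ih ⟨j + d, hlt⟩ j rfl
        have b := hn (show (⟨j + d, hlt⟩ : Fin r) < i from by
          rw [Fin.lt_def]; simp only; omega)
        push_cast
        omega
    intro i j hij
    have hij' : (j : ℕ) ≤ i := hij
    have := key (i - j) i j (by omega)
    push_cast [Nat.cast_sub hij'] at this
    exact this
  let v : Fin r → Fin r → ℤ := fun i j => max (2 * n j) (⌊x j⌋ - m) + ((i : ℤ) - j)
  have hne : ∀ i : Fin r, (Finset.Iic i).Nonempty := fun i => ⟨i, Finset.mem_Iic.2 le_rfl⟩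
  have hself : ∀ i, max (2 * n i) (⌊x i⌋ - m) ≤ (Finset.Iic i).sup' (hne i) (v i) := fun i => by
    have := Finset.le_sup' (v i) (Finset.mem_Iic.2 (le_refl i))
    simpa only [v, sub_self, add_zero] using this
  have hfl : ∀ j, ⌊x j⌋ ≤ 2 * n j + 2 * m + 1 := fun j => by
    have : ⌊x j⌋ < 2 * n j + 2 * m + 2 := by
      rw [Int.floor_lt]
      push_cast
      exact h1 j
    omega
  refine ⟨fun i => (Finset.Iic i).sup' (hne i) (v i), ?_, ?_, ?_, ?_, ?_⟩
  · intro i i' hii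
    simp only
    rw [Finset.sup'_lt_iff]
    intro j hj
    have hj' := Finset.mem_Iic.1 hj
    have := Finset.le_sup' (v i') (Finset.mem_Iic.2 (hj'.trans hii.le))
    refine lt_of_lt_of_le ?_ this
    have : (i : ℕ) < i' := hii
    simp only [v]
    omega
  · exact fun i => (le_max_left _ _).trans (hself i)
  · intro i
    refine Finset.sup'_le _ _ fun j hj => ?_
    have hj' : j ≤ i := Finset.mem_Iic.1 hj
    have hj'' : (j : ℕ) ≤ i := hj'
    have := hgap i j hj'
    have := hfl j
    simp only [v]
    push_cast
    omega
  · intro i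
    obtain ⟨j, hj, e⟩ := Finset.exists_mem_eq_sup' (hne i) (v i)
    simp only [e]
    have hj' : j ≤ i := Finset.mem_Iic.1 hj
    have hj'' : (j : ℕ) ≤ i := hj'
    have hg := hgap i j hj'
    have hf := hfl j
    -- close indices are compared through `x j ≤ x i`, distant ones through `2 * n i < x i`
    by_cases hc : v i j ≤ 2 * n i
    · have : (v i j : ℝ) ≤ 2 * n i := by exact_mod_cast hc
      linarith [h0 i]
    · have hv : v i j ≤ ⌊x j⌋ - m + ((i : ℤ) - j) := by
        simp only [v] at hc ⊢
        omega
      have hd : (i : ℤ) - j ≤ m := by omega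
      rcases hj'.eq_or_lt with rfl | hlt
      · have h : v j j + 1 ≤ ⌊x j⌋ := by omega
        have h' : ((v j j + 1 : ℤ) : ℝ) ≤ ⌊x j⌋ := by exact_mod_cast h
        push_cast at h'
        linarith [Int.floor_le (x j)]
      · have h : v i j ≤ ⌊x j⌋ := by omega
        have h' : (v i j : ℝ) ≤ ⌊x j⌋ := by exact_mod_cast h
        linarith [Int.floor_le (x j), hx hlt]
  · intro i
    have : ⌊x i⌋ - m ≤ (Finset.Iic i).sup' (hne i) (v i) := (le_max_right _ _).trans (hself i)
    have : ((⌊x i⌋ - m : ℤ) : ℝ) ≤ ((Finset.Iic i).sup' (hne i) (v i) : ℤ) := by exact_mod_cast this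
    push_cast at this
    linarith [Int.lt_floor_add_one (x i)]

/-- At a scale where consecutive nodes are further apart than the support of the spline, no column
meets two rows, so all minors are products of diagonal entries; the two-scale relation carries
their positivity back to the original scale. -/
lemma minor_rows_pos {r : ℕ} (m s : ℕ) {x : Fin r → ℝ} (hx : StrictMono x)
    (hsep : ∀ i j, i < j → (m : ℝ) + 2 < 2 ^ s * (x j - x i)) :
    NonnegMinors (rows (m + 1) x) ∧ ∀ n : Fin r → ℤ, StrictMono n →
      (∀ i, (n i : ℝ) < x i) → (∀ i, x i < n i + m + 2) → 0 < minor (rows (m + 1) x) n := by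
  induction s generalizing x with
  | zero =>
    have hdiag : ∀ n : Fin r → ℤ, StrictMono n →
        minor (rows (m + 1) x) n = ∏ i, bspline (m + 1) (x i - n i) := by
      intro n hn
      refine det_eq_prod_diag _ fun i j a b hij hab h1 h2 => ?_
      have h1' := (bspline_support _ _ h1).2
      have h2' := (bspline_support _ _ h2).1
      have h3 := hsep a b hab
      have h4 : (n i : ℝ) < n j := by exact_mod_cast hn hij
      push_cast at h1'
      linarith
    refine ⟨fun n hn => ?_, fun n hn h0 h1 => ?_⟩
    · rw [hdiag n hn]
      exact Finset.prod_nonneg fun i _ => bspline_nonneg _ _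
    · rw [hdiag n hn]
      refine Finset.prod_pos fun i _ => bspline_pos _ _ (by linarith [h0 i]) ?_
      push_cast
      linarith [h1 i]
  | succ s ih =>
    have hx2 : StrictMono fun i => 2 * x i := fun i j hij => by
      have := hx hij
      simp only
      linarith
    obtain ⟨hN, hP⟩ := ih hx2 fun i j hij => by
      have := hsep i j hij
      rw [pow_succ] at this
      linarith
    have hn2 : ∀ n : Fin r → ℤ, StrictMono n → StrictMono fun i => 2 * n i :=
      fun n hn i j hij => by
        have := hn hij
        simp only
        omega
    refine ⟨fun n hn => ?_, fun n hn h0 h1 => ?_⟩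
    · rw [minor_rows_refine]
      exact mul_nonneg (by positivity) (hN.colStep_iterate _ _ (hn2 n hn))
    · rw [minor_rows_refine]
      refine mul_pos (by positivity) ?_
      obtain ⟨k, hk, hk1, hk2, hk3, hk4⟩ := exists_fine_columns (m + 1) (by omega) hx2 hn
        (fun i => by linarith [h0 i]) (fun i => by push_cast; linarith [h1 i])
      refine minor_iterate_pos hN (m + 1 + 1) (hn2 n hn) hk hk1 hk2 (hP k hk hk3 fun i => ?_)
      have := hk4 i
      push_cast at this
      linarith

lemma exists_separating_scale {r : ℕ} {x : Fin r → ℝ} (hx : StrictMono x) (c : ℝ) :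
    ∃ s : ℕ, ∀ i j, i < j → c < 2 ^ s * (x j - x i) := by
  have h : ∀ᶠ s : ℕ in Filter.atTop, ∀ i j, i < j → c < 2 ^ s * (x j - x i) := by
    rw [Filter.eventually_all]
    intro i
    rw [Filter.eventually_all]
    intro j
    by_cases hij : i < j
    · have := (tendsto_pow_atTop_atTop_of_one_lt (one_lt_two (α := ℝ))).atTop_mul_const
        (sub_pos.2 (hx hij))
      filter_upwards [this.eventually_gt_atTop c] with s hs _ using hs
    · exact Filter.Eventually.of_forall fun s h => absurd h hij
  exact h.exists

/-! ### Vanishing determinants -/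

/-- A matrix with a zero block on rows `≤ i`, columns `≥ i` is singular. -/
lemma det_eq_zero_of_block {r : ℕ} (A : Matrix (Fin r) (Fin r) ℝ) (i : Fin r)
    (h : ∀ a b, a ≤ i → i ≤ b → A a b = 0) : A.det = 0 := by
  rw [Matrix.det_apply]
  refine Finset.sum_eq_zero fun σ _ => ?_
  obtain ⟨k, hk, hσ⟩ : ∃ k, i ≤ k ∧ σ k ≤ i := by
    by_contra! hc
    have := Finset.card_le_card_of_injOn (s := Finset.Ici i) (t := Finset.Ioi i) σ
      (fun k hk => by simpa using hc k (by simpa using hk)) σ.injective.injOn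
    rw [Fin.card_Ici, Fin.card_Ioi] at this
    have := i.isLt
    omega
  have : ∏ j, A (σ j) j = 0 := Finset.prod_eq_zero (Finset.mem_univ k) (h _ _ hσ hk)
  rw [this, smul_zero]

/-- Schönberg–Whitney: the collocation matrix `[φ_m(tᵢ - nⱼ)]` is
invertible iff all diagonal entries `φ_m(tᵢ - nᵢ)` are nonzero. -/
theorem stmt_8 (m : ℕ) (r : ℕ) (n : Fin r → ℤ) (t : Fin r → ℝ)
    (hn : StrictMono n) (ht : StrictMono t) :
    IsUnit (Matrix.of fun i j : Fin r => bspline m (t i - n j)).det ↔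
      ∀ i : Fin r, bspline m (t i - n i) ≠ 0 := by
  rw [isUnit_iff_ne_zero]
  cases m with
  | zero =>
    rw [det_eq_prod_diag, Finset.prod_ne_zero_iff]
    · simp
    · intro i j a b hij hab h1 h2
      have h1' := (bspline_support _ _ h1).2
      have h2' := (bspline_support _ _ h2).1
      have h3 := ht hij
      have h4 : (n a : ℝ) + 1 ≤ n b := by exact_mod_cast hn hab
      have h5 := (bspline_support _ _ h1).1
      have h6 := (bspline_support _ _ h2).2
      push_cast at h6
      linarith
  | succ m =>
    have hn' : ∀ a b, a ≤ b → (n a : ℝ) ≤ n b := fun a b hab => by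
      exact_mod_cast hn.monotone hab
    constructor
    · intro hdet i hi
      apply hdet
      have hi' : t i ≤ n i ∨ n i + (m + 1 : ℕ) + 1 ≤ t i := by
        by_contra! hc
        exact (bspline_succ_ne_zero m _).2 ⟨by linarith [hc.1], by linarith [hc.2]⟩ hi
      rcases hi' with hi' | hi'
      · refine det_eq_zero_of_block _ i fun a b ha hb => ?_
        by_contra hne
        have := ((bspline_succ_ne_zero m _).1 hne).1
        linarith [ht.monotone ha, hn' _ _ hb]
      · rw [← Matrix.det_transpose]
        refine det_eq_zero_of_block _ i fun a b ha hb => ?_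
        by_contra hne
        have := ((bspline_succ_ne_zero m _).1 hne).2
        linarith [ht.monotone hb, hn' _ _ ha]
    · intro h
      obtain ⟨s, hs⟩ := exists_separating_scale ht ((m : ℝ) + 2)
      have h' := fun i => (bspline_succ_ne_zero m _).1 (h i)
      have hpos := (minor_rows_pos m s ht hs).2 n hn (fun i => by linarith [(h' i).1])
        fun i => by
          have := (h' i).2
          push_cast at this
          linarith
      rw [← Matrix.det_transpose]
      exact hpos.ne'
end

section
/- Let m ≥ 1 and let E ⊂ [N_1, N_2] be a local phaseless sampling set for V_m|_{[N_1,N_2]} (i.e., satisfying conditions (1)–(4) of Theorem 1.2 of the paper). Then #(E ∩ [N_1, N_1+1)) ≥ m+1 and #(E ∩ (N_2−1, N_2]) ≥ m+1; in particular, if #(E ∩ [N_1, N_1+1)) ≤ m, then there exist nonseparable f_1, f_2 ∈ V_m|_{[N_1,N_2]} with f_1 ≠ ±f_2 and |f_1| = |f_2| on E. -/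
/-!
Suppose `E` has at most `m` points in the end interval `[N₁, N₁ + 1)`. Let `h = φ_m(· - (N₁ - m))`,
which vanishes on `[N₁ + 1, N₂]`. On the first unit interval `m + 1` shifts are active, so a
nontrivial combination `g` of them vanishes at the at most `m` samples there
(`exists_annihilator`); give `g` coefficients `1` at all other shifts. Then `g h = 0` on `E`, so
`g + h` and `g - h` have the same unsigned samples, but they do not agree up to a sign because
`g` and `h` are both nonzero. The other end is symmetric, with `h = φ_m(· - (N₂ - 1))`.

Both functions are nonseparable (`not_separable_of_coeff`). If a product of two splines vanishes,
then one factor vanishes on each unit interval, since splines are polynomial there. By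
local linear independence (`coeff_eq_zero_of_localPoly`), a change of the vanishing factor between
adjacent unit intervals forces the `m` coefficients of the sum active on both intervals to vanish.
For `g ± h` this can only concern the active coefficients of `g` other than that of `h`, and these
are not all zero, because `h` has no zero in the end interval.

Local linear independence comes from explicit polynomial pieces of `φ_m` (`piece`): differentiation
lowers the degree by one, and the shifts form a partition of unity.
-/

open MeasureTheory

/-- The spline `Σ_{n=N₁-m}^{N₂-1} cₙ φ_m(x-n)`. -/
noncomputable def splineFun (m : ℕ) (N₁ N₂ : ℤ) (c : ℤ → ℝ) (x : ℝ) : ℝ :=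
  ∑ n ∈ Finset.Icc (N₁ - m) (N₂ - 1), c n * bspline m (x - n)

/-- A function of `V_m|_{[N₁,N₂]}` (given by its coefficients `c`) is separable if it
splits as a sum of two nonzero elements of the space with pointwise product zero. -/
def SeparableSpline (m : ℕ) (N₁ N₂ : ℤ) (c : ℤ → ℝ) : Prop :=
  ∃ c₁ c₂ : ℤ → ℝ,
    (∀ x ∈ Set.Icc (N₁ : ℝ) N₂,
      splineFun m N₁ N₂ c x = splineFun m N₁ N₂ c₁ x + splineFun m N₁ N₂ c₂ x) ∧
    (∃ x ∈ Set.Icc (N₁ : ℝ) N₂, splineFun m N₁ N₂ c₁ x ≠ 0) ∧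
    (∃ x ∈ Set.Icc (N₁ : ℝ) N₂, splineFun m N₁ N₂ c₂ x ≠ 0) ∧
    (∀ x ∈ Set.Icc (N₁ : ℝ) N₂, splineFun m N₁ N₂ c₁ x * splineFun m N₁ N₂ c₂ x = 0)

/-- `E` is a local phaseless sampling set for `V_m|_{[N₁,N₂]}`: every nonseparable
function of the space is determined up to a sign on `[N₁,N₂]` by its unsigned samples. -/
def IsPhaselessSamplingSet (m : ℕ) (N₁ N₂ : ℤ) (E : Finset ℝ) : Prop :=
  (E : Set ℝ) ⊆ Set.Icc (N₁ : ℝ) N₂ ∧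
  ∀ c c' : ℤ → ℝ, ¬ SeparableSpline m N₁ N₂ c →
    (∀ x ∈ E, |splineFun m N₁ N₂ c x| = |splineFun m N₁ N₂ c' x|) →
    (∀ x ∈ Set.Icc (N₁ : ℝ) N₂, splineFun m N₁ N₂ c' x = splineFun m N₁ N₂ c x) ∨
    (∀ x ∈ Set.Icc (N₁ : ℝ) N₂, splineFun m N₁ N₂ c' x = -splineFun m N₁ N₂ c x)

/-! ### The polynomial pieces of B-splines -/

open Polynomial in
lemma exists_antideriv (p : ℝ[X]) : ∃ q : ℝ[X], derivative q = p ∧ q.eval 0 = 0 := by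
  induction p using Polynomial.induction_on' with
  | add p q hp hq =>
    obtain ⟨a, ha, ha'⟩ := hp
    obtain ⟨b, hb, hb'⟩ := hq
    exact ⟨a + b, by simp [ha, hb], by simp [ha', hb']⟩
  | monomial n a =>
    refine ⟨monomial (n + 1) (a / (n + 1)), ?_, by simp⟩
    rw [derivative_monomial]
    have : ((n : ℝ) + 1) ≠ 0 := by positivity
    simp [this]

/-- The antiderivative of a real polynomial vanishing at `0`. -/
noncomputable def antideriv (p : Polynomial ℝ) : Polynomial ℝ := (exists_antideriv p).choose

lemma derivative_antideriv (p : Polynomial ℝ) : (antideriv p).derivative = p :=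
  (exists_antideriv p).choose_spec.1

lemma antideriv_eval_zero (p : Polynomial ℝ) : (antideriv p).eval 0 = 0 :=
  (exists_antideriv p).choose_spec.2

lemma poly_eq_of_derivative {p q : Polynomial ℝ} (a : ℝ) (h : p.derivative = q.derivative)
    (ha : p.eval a = q.eval a) : p = q := by
  have h1 : (p - q).derivative = 0 := by simp [h]
  have h2 := Polynomial.eq_C_of_derivative_eq_zero h1
  have h3 : (p - q).eval a = 0 := by simp [ha]
  rw [h2, Polynomial.eval_C] at h3
  rw [h3, Polynomial.C_0] at h2
  exact sub_eq_zero.mp h2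

lemma antideriv_zero : antideriv 0 = 0 :=
  poly_eq_of_derivative 0 (by simp [derivative_antideriv]) (by simp [antideriv_eval_zero])

/-- The polynomial `u ↦ φ_m(i + u)` on the unit interval, i.e. the piece of the degree-`m`
B-spline on `[i, i + 1]`, in the local variable `u = x - i`. The recursion is the convolution
`φ_{m+1}(i + u) = ∫ s in i..i+u, φ_m s + ∫ s in i+u-1..i, φ_m s` split at the knot `i`. -/
noncomputable def piece : ℕ → ℤ → Polynomial ℝ
  | 0, i => if i = 0 then 1 else 0
  | m + 1, i => antideriv (piece m i) - antideriv (piece m (i - 1)) +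
      Polynomial.C ((antideriv (piece m (i - 1))).eval 1)

lemma derivative_piece (m : ℕ) (i : ℤ) :
    (piece (m + 1) i).derivative = piece m i - piece m (i - 1) := by
  simp [piece, derivative_antideriv]

lemma piece_of_neg (m : ℕ) (i : ℤ) (hi : i < 0) : piece m i = 0 := by
  induction m generalizing i with
  | zero => simp [piece, hi.ne]
  | succ m ih => simp [piece, ih i hi, ih (i - 1) (by lia), antideriv_zero]

lemma piece_of_gt (m : ℕ) (i : ℤ) (hi : (m : ℤ) < i) : piece m i = 0 := by
  induction m generalizing i with
  | zero =>
    have : i ≠ 0 := by lia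
    simp [piece, this]
  | succ m ih =>
    push_cast at hi
    simp [piece, ih i (by lia), ih (i - 1) (by lia), antideriv_zero]

open Polynomial in
lemma piece_first (m : ℕ) : piece m 0 = C ((m.factorial : ℝ)⁻¹) * X ^ m := by
  induction m with
  | zero => simp [piece]
  | succ m ih =>
    refine poly_eq_of_derivative 0 ?_ ?_
    · rw [derivative_piece, ih, piece_of_neg m (0 - 1) (by norm_num), derivative_C_mul_X_pow]
      have : ((m : ℝ) + 1) ≠ 0 := by positivity
      have h3 : (((m + 1).factorial : ℕ) : ℝ)⁻¹ * ((m : ℝ) + 1) = (m.factorial : ℝ)⁻¹ := by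
        rw [Nat.factorial_succ]; push_cast; field_simp
      simp only [sub_zero, Nat.add_sub_cancel]
      push_cast
      rw [h3]
    · simp [piece, antideriv_eval_zero, piece_of_neg m (-1) (by norm_num), antideriv_zero]

open Polynomial in
lemma piece_last (m : ℕ) : piece m m = C ((m.factorial : ℝ)⁻¹) * (1 - X) ^ m := by
  induction m with
  | zero => simp [piece]
  | succ m ih =>
    have hz : piece m ((m + 1 : ℕ) : ℤ) = 0 := piece_of_gt m _ (by push_cast; lia)
    have hs : ((m + 1 : ℕ) : ℤ) - 1 = m := by push_cast; ring
    refine poly_eq_of_derivative 1 ?_ ?_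
    · rw [derivative_piece, hz, hs, ih, derivative_C_mul, derivative_pow]
      have : ((m : ℝ) + 1) ≠ 0 := by positivity
      have h2 : (m.factorial : ℝ) ≠ 0 := by positivity
      have h3 : ((m.factorial : ℝ))⁻¹ = (((m + 1).factorial : ℕ) : ℝ)⁻¹ * ((m : ℝ) + 1) := by
        rw [Nat.factorial_succ]; push_cast; field_simp
      rw [h3]
      simp
      ring
    · push_cast at hz
      simp [piece, hz, antideriv_zero]

lemma sum_piece_eq_one (m : ℕ) : ∑ i ∈ Finset.range (m + 1), piece m i = 1 := by
  induction m with
  | zero => simp [piece]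
  | succ m ih =>
    have hshift : ∑ i ∈ Finset.range (m + 1 + 1), piece m ((i : ℤ) - 1) = 1 := by
      rw [Finset.sum_range_succ', piece_of_neg m _ (by norm_num), add_zero, ← ih]
      exact Finset.sum_congr rfl fun i _ => by congr 1; push_cast; ring
    refine poly_eq_of_derivative 0 ?_ ?_
    · rw [Polynomial.derivative_sum]
      simp_rw [derivative_piece]
      rw [Finset.sum_sub_distrib, hshift, Finset.sum_range_succ, ih,
        piece_of_gt m _ (by push_cast; lia)]
      simp
    · -- the value at `0` is `∫₀¹` of the partition of unity one degree lower
      have hX : ∑ i ∈ Finset.range (m + 1 + 1), antideriv (piece m ((i : ℤ) - 1)) =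
          Polynomial.X := by
        refine poly_eq_of_derivative 0 ?_ ?_
        · rw [Polynomial.derivative_sum]
          simp_rw [derivative_antideriv]
          rw [hshift, Polynomial.derivative_X]
        · simp [Polynomial.eval_finsetSum, antideriv_eval_zero]
      have h1 := congrArg (Polynomial.eval 1) hX
      rw [Polynomial.eval_finsetSum, Polynomial.eval_X] at h1
      simp only [Polynomial.eval_finsetSum, piece, Polynomial.eval_add, Polynomial.eval_sub,
        antideriv_eval_zero, Polynomial.eval_C, Polynomial.eval_one]
      simpa using h1

/-- Linear independence of the `m + 1` B-spline pieces: differentiating a vanishing combination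
gives a vanishing combination of degree `m - 1` pieces with coefficients `b i - b (i + 1)`, so all
coefficients agree, and the partition of unity forces the common value to be `0`. -/
lemma piece_linearIndependent (m : ℕ) (b : ℕ → ℝ)
    (h : ∑ i ∈ Finset.range (m + 1), Polynomial.C (b i) * piece m i = 0) :
    ∀ i ≤ m, b i = 0 := by
  induction m generalizing b with
  | zero =>
    intro i hi
    obtain rfl : i = 0 := by lia
    simpa [piece] using h
  | succ m ih =>
    have hd := congrArg Polynomial.derivative h
    rw [Polynomial.derivative_sum, Polynomial.derivative_zero] at hd
    simp_rw [Polynomial.derivative_C_mul, derivative_piece, mul_sub] at hd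
    rw [Finset.sum_sub_distrib, Finset.sum_range_succ, piece_of_gt m _ (by push_cast; lia),
      Finset.sum_range_succ' _ (m + 1), piece_of_neg m _ (by norm_num), mul_zero, add_zero,
      mul_zero, add_zero, ← Finset.sum_sub_distrib] at hd
    have hb : ∀ i ≤ m, b i - b (i + 1) = 0 := by
      refine ih (fun i => b i - b (i + 1)) ?_
      rw [← hd]
      refine Finset.sum_congr rfl fun i _ => ?_
      have : ((i + 1 : ℕ) : ℤ) - 1 = i := by push_cast; ring
      rw [this, Polynomial.C_sub, sub_mul]
    have hc : ∀ i ≤ m + 1, b i = b 0 := by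
      intro i
      induction i with
      | zero => simp
      | succ i ihi =>
        intro hi
        have h1 := hb i (by lia)
        have h2 := ihi (by lia)
        linarith
    have h0 : b 0 = 0 := by
      have : ∑ i ∈ Finset.range (m + 1 + 1), Polynomial.C (b i) * piece (m + 1) i =
          Polynomial.C (b 0) * ∑ i ∈ Finset.range (m + 1 + 1), piece (m + 1) i := by
        rw [Finset.mul_sum]
        refine Finset.sum_congr rfl fun i hi => ?_
        rw [hc i (by have := Finset.mem_range.mp hi; lia)]
      rw [this, sum_piece_eq_one, mul_one] at h
      simpa using h
    intro i hi
    rw [hc i hi, h0]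

/-! ### B-splines are piecewise polynomial -/

lemma integral_poly_shift (p : Polynomial ℝ) (a b c : ℝ) :
    ∫ s in a..b, p.eval (s - c) = (antideriv p).eval (b - c) - (antideriv p).eval (a - c) := by
  refine intervalIntegral.integral_eq_sub_of_hasDerivAt
    (f := fun s => (antideriv p).eval (s - c)) (fun x _ => ?_) ?_
  · have h := (antideriv p).hasDerivAt (x - c)
    rw [derivative_antideriv] at h
    exact h.comp_sub_const x c
  · exact (p.continuous.comp (continuous_id.sub continuous_const)).intervalIntegrable _ _

lemma bspline_succ_piece (m : ℕ) (i : ℤ)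
    (ih : ∀ j : ℤ, ∀ u ∈ Set.Ioo (0 : ℝ) 1, bspline m (j + u) = (piece m j).eval u)
    (u : ℝ) (hu : u ∈ Set.Icc (0 : ℝ) 1) :
    bspline (m + 1) (i + u) = (piece (m + 1) i).eval u := by
  obtain ⟨hu0, hu1⟩ := hu
  have e1 : Set.EqOn (fun s : ℝ => (piece m i).eval (s - i)) (bspline m)
      (Set.Ioo (i : ℝ) (i + u)) := by
    intro s hs
    have := ih i (s - i) ⟨by linarith [hs.1], by linarith [hs.2]⟩
    simpa using this.symm
  have e2 : Set.EqOn (fun s : ℝ => (piece m (i - 1)).eval (s - (i - 1))) (bspline m)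
      (Set.Ioo (i + u - 1 : ℝ) i) := by
    intro s hs
    have := ih (i - 1) (s - (i - 1)) ⟨by linarith [hs.1], by linarith [hs.2]⟩
    simpa using this.symm
  have c1 : IntervalIntegrable (bspline m) volume (i : ℝ) (i + u) := by
    rw [← Set.uIoo_of_le (by linarith)] at e1
    exact (Continuous.intervalIntegrable (by fun_prop) _ _).congr_uIoo e1
  have c2 : IntervalIntegrable (bspline m) volume (i + u - 1 : ℝ) i := by
    rw [← Set.uIoo_of_le (by linarith)] at e2
    exact (Continuous.intervalIntegrable (by fun_prop) _ _).congr_uIoo e2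
  have hI : bspline (m + 1) (i + u) = ∫ s in (i + u - 1 : ℝ)..(i + u), bspline m s := by
    have := intervalIntegral.integral_comp_sub_left (a := 0) (b := 1) (bspline m) (i + u : ℝ)
    rw [sub_zero] at this
    exact this
  rw [hI, ← intervalIntegral.integral_add_adjacent_intervals c2 c1,
    ← intervalIntegral.integral_congr_Ioo_of_le (by linarith) e1,
    ← intervalIntegral.integral_congr_Ioo_of_le (by linarith) e2,
    integral_poly_shift, integral_poly_shift]
  have a1 : (i : ℝ) - (i - 1) = 1 := by ring
  have a2 : (i + u - 1 : ℝ) - (i - 1) = u := by ring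
  rw [a1, a2]
  simp [piece, antideriv_eval_zero]
  ring

/-- The open interval is needed for `m = 0`, where the spline is `1` at both endpoints `0`, `1`. -/
lemma bspline_piece_Ioo (m : ℕ) :
    ∀ i : ℤ, ∀ u ∈ Set.Ioo (0 : ℝ) 1, bspline m (i + u) = (piece m i).eval u := by
  induction m with
  | zero =>
    intro i u hu
    by_cases hi : i = 0
    · subst hi
      have : u ∈ Set.Icc (0 : ℝ) 1 := ⟨hu.1.le, hu.2.le⟩
      simp [bspline, piece, this.1, this.2]
    · have : ¬ ((i : ℝ) + u ∈ Set.Icc (0 : ℝ) 1) := by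
        rintro ⟨h1, h2⟩
        have h3 : (-1 : ℝ) < i := by linarith [hu.2]
        have h4 : (i : ℝ) < 1 := by linarith [hu.1]
        have h5 : (-1 : ℤ) < i := by exact_mod_cast h3
        have h6 : i < (1 : ℤ) := by exact_mod_cast h4
        exact hi (by lia)
      simp only [bspline, piece, if_neg hi, Set.indicator_of_notMem this, Polynomial.eval_zero]
  | succ m ih =>
    exact fun i u hu => bspline_succ_piece m i ih u ⟨hu.1.le, hu.2.le⟩

/-- For `m ≥ 1` the B-spline is continuous, so its pieces also give the values at the knots. -/
lemma bspline_piece (m : ℕ) (hm : 1 ≤ m) (i : ℤ) (u : ℝ) (hu : u ∈ Set.Icc (0 : ℝ) 1) :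
    bspline m (i + u) = (piece m i).eval u := by
  obtain ⟨k, rfl⟩ : ∃ k, m = k + 1 := ⟨m - 1, by lia⟩
  exact bspline_succ_piece k i (bspline_piece_Ioo k) u hu

lemma bspline_of_nonpos (m : ℕ) (hm : 1 ≤ m) (y : ℝ) (hy : y ≤ 0) : bspline m y = 0 := by
  have h1 := Int.ceil_lt_add_one y
  have h2 := Int.le_ceil y
  have h3 : ⌈y⌉ ≤ 0 := Int.ceil_le.mpr (by simpa using hy)
  have h := bspline_piece m hm (⌈y⌉ - 1) (y - (⌈y⌉ - 1)) ⟨by linarith, by linarith⟩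
  rw [piece_of_neg m _ (by lia)] at h
  simpa using h

lemma bspline_of_ge (m : ℕ) (hm : 1 ≤ m) (y : ℝ) (hy : (m : ℝ) + 1 ≤ y) : bspline m y = 0 := by
  have h3 : (m : ℤ) + 1 ≤ ⌊y⌋ := Int.le_floor.mpr (by push_cast; exact hy)
  have h := bspline_piece m hm ⌊y⌋ (Int.fract y) ⟨Int.fract_nonneg y, (Int.fract_lt_one y).le⟩
  rw [piece_of_gt m _ (by lia), Int.floor_add_fract] at h
  simpa using h

lemma bspline_ne_zero_first (m : ℕ) (hm : 1 ≤ m) (y : ℝ) (hy : y ∈ Set.Ioc (0 : ℝ) 1) :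
    bspline m y ≠ 0 := by
  have h := bspline_piece m hm 0 y ⟨hy.1.le, hy.2⟩
  rw [piece_first] at h
  simp only [Int.cast_zero, zero_add] at h
  rw [h]
  have := hy.1.ne'
  simp [Nat.factorial_ne_zero, this]

lemma bspline_ne_zero_last (m : ℕ) (hm : 1 ≤ m) (y : ℝ) (hy : y ∈ Set.Ico (m : ℝ) (m + 1)) :
    bspline m y ≠ 0 := by
  have h := bspline_piece m hm m (y - m) ⟨by linarith [hy.1], by linarith [hy.2]⟩
  rw [piece_last] at h
  simp only [Int.cast_natCast, add_sub_cancel] at h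
  rw [h]
  have : 1 - (y - m) ≠ 0 := by linarith [hy.2]
  simp [Nat.factorial_ne_zero, this]

/-! ### Local linear independence -/

/-- The polynomial `u ↦ f (k + u)` on `[0, 1]`, where `f` is the spline with coefficients `c`. -/
noncomputable def localPoly (m : ℕ) (N₁ N₂ : ℤ) (c : ℤ → ℝ) (k : ℤ) : Polynomial ℝ :=
  ∑ n ∈ Finset.Icc (N₁ - m) (N₂ - 1), Polynomial.C (c n) * piece m (k - n)

lemma splineFun_eq_localPoly (m : ℕ) (hm : 1 ≤ m) (N₁ N₂ : ℤ) (c : ℤ → ℝ) (k : ℤ) (u : ℝ)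
    (hu : u ∈ Set.Icc (0 : ℝ) 1) :
    splineFun m N₁ N₂ c (k + u) = (localPoly m N₁ N₂ c k).eval u := by
  simp only [splineFun, localPoly, Polynomial.eval_finsetSum, Polynomial.eval_mul,
    Polynomial.eval_C]
  refine Finset.sum_congr rfl fun n _ => ?_
  rw [← bspline_piece m hm (k - n) u hu]
  congr 2
  push_cast
  ring

lemma splineFun_eq_localPoly' (m : ℕ) (hm : 1 ≤ m) (N₁ N₂ : ℤ) (c : ℤ → ℝ) (k : ℤ) (x : ℝ)
    (hx : x ∈ Set.Icc (k : ℝ) (k + 1)) :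
    splineFun m N₁ N₂ c x = (localPoly m N₁ N₂ c k).eval (x - k) := by
  rw [← splineFun_eq_localPoly m hm N₁ N₂ c k (x - k) ⟨by linarith [hx.1], by linarith [hx.2]⟩]
  congr 1
  ring

lemma poly_eq_zero_of_unitInterval (p : Polynomial ℝ)
    (h : ∀ u ∈ Set.Icc (0 : ℝ) 1, p.eval u = 0) : p = 0 :=
  p.eq_zero_of_infinite_isRoot ((Set.Icc_infinite zero_lt_one).mono fun u hu => h u hu)

/-- Local linear independence: only the coefficients with index in `[k - m, k]` matter on
`[k, k + 1]`, and these are determined there. -/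
lemma coeff_eq_zero_of_localPoly (m : ℕ) (N₁ N₂ : ℤ) (c : ℤ → ℝ) (k : ℤ) (hk₁ : N₁ ≤ k)
    (hk₂ : k ≤ N₂ - 1) (h : localPoly m N₁ N₂ c k = 0) :
    ∀ n ∈ Finset.Icc (k - m) k, c n = 0 := by
  have hs : ∑ i ∈ Finset.range (m + 1), Polynomial.C (c (k - i)) * piece m i = 0 := by
    rw [← h, localPoly]
    have hsub : Finset.Icc (k - m) k ⊆ Finset.Icc (N₁ - m) (N₂ - 1) :=
      Finset.Icc_subset_Icc (by lia) hk₂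
    rw [← Finset.sum_subset hsub]
    · refine Finset.sum_bij (fun i _ => k - (i : ℤ)) ?_ ?_ ?_ ?_
      · intro i hi
        have := Finset.mem_range.mp hi
        rw [Finset.mem_Icc]
        lia
      · intro i _ j _ hij
        lia
      · intro n hn
        rw [Finset.mem_Icc] at hn
        exact ⟨(k - n).toNat, by rw [Finset.mem_range]; lia, by lia⟩
      · intro i _
        simp
    · intro n _ hn
      rw [Finset.mem_Icc, not_and_or, not_le, not_le] at hn
      rcases hn with hn | hn
      · rw [piece_of_gt m _ (by lia), mul_zero]
      · rw [piece_of_neg m _ (by lia), mul_zero]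
  intro n hn
  rw [Finset.mem_Icc] at hn
  have := piece_linearIndependent m (fun i => c (k - i)) hs (k - n).toNat (by lia)
  have e : k - ((k - n).toNat : ℤ) = n := by lia
  simpa only [e] using this

lemma localPoly_eq_zero_of_coeff (m : ℕ) (N₁ N₂ : ℤ) (c : ℤ → ℝ) (k : ℤ)
    (h : ∀ n ∈ Finset.Icc (k - m) k, c n = 0) : localPoly m N₁ N₂ c k = 0 := by
  refine Finset.sum_eq_zero fun n _ => ?_
  by_cases hn : n ∈ Finset.Icc (k - m) k
  · rw [h n hn, Polynomial.C_0, zero_mul]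
  · rw [Finset.mem_Icc, not_and_or, not_le, not_le] at hn
    rcases hn with hn | hn
    · rw [piece_of_gt m _ (by lia), mul_zero]
    · rw [piece_of_neg m _ (by lia), mul_zero]

lemma splineFun_add (m : ℕ) (N₁ N₂ : ℤ) (c d : ℤ → ℝ) (x : ℝ) :
    splineFun m N₁ N₂ (c + d) x = splineFun m N₁ N₂ c x + splineFun m N₁ N₂ d x := by
  simp [splineFun, add_mul, Finset.sum_add_distrib]

lemma splineFun_sub (m : ℕ) (N₁ N₂ : ℤ) (c d : ℤ → ℝ) (x : ℝ) :
    splineFun m N₁ N₂ (c - d) x = splineFun m N₁ N₂ c x - splineFun m N₁ N₂ d x := by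
  simp [splineFun, sub_mul, Finset.sum_sub_distrib]

lemma splineFun_single (m : ℕ) (N₁ N₂ : ℤ) (e : ℤ) (he : e ∈ Finset.Icc (N₁ - m) (N₂ - 1))
    (x : ℝ) : splineFun m N₁ N₂ (Pi.single e 1) x = bspline m (x - e) := by
  rw [splineFun, Finset.sum_eq_single e]
  · simp
  · intro n _ hn
    simp [hn]
  · exact fun h => absurd he h

lemma mem_Icc_of_unit {N₁ N₂ k : ℤ} (hk₁ : N₁ ≤ k) (hk₂ : k ≤ N₂ - 1) {x : ℝ}
    (hx : x ∈ Set.Icc (k : ℝ) (k + 1)) : x ∈ Set.Icc (N₁ : ℝ) N₂ := by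
  have h1 : (N₁ : ℝ) ≤ k := by exact_mod_cast hk₁
  have h2 : (k : ℝ) + 1 ≤ N₂ := by exact_mod_cast (by lia : k + 1 ≤ N₂)
  exact ⟨by linarith [hx.1], by linarith [hx.2]⟩

lemma exists_unit_of_mem_Icc {N₁ N₂ : ℤ} (hN : N₁ < N₂) {x : ℝ}
    (hx : x ∈ Set.Icc (N₁ : ℝ) N₂) :
    ∃ k : ℤ, N₁ ≤ k ∧ k ≤ N₂ - 1 ∧ x ∈ Set.Icc (k : ℝ) (k + 1) := by
  rcases hx.2.lt_or_eq with h | h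
  · refine ⟨⌊x⌋, Int.le_floor.mpr hx.1, ?_, Int.floor_le x, (Int.lt_floor_add_one x).le⟩
    have := Int.floor_lt.mpr h
    lia
  · refine ⟨N₂ - 1, by lia, le_rfl, ?_, ?_⟩ <;> push_cast <;> linarith

lemma localPoly_eq_zero_of_splineFun (m : ℕ) (hm : 1 ≤ m) (N₁ N₂ : ℤ) (c : ℤ → ℝ) (k : ℤ)
    (h : ∀ x ∈ Set.Icc (k : ℝ) (k + 1), splineFun m N₁ N₂ c x = 0) :
    localPoly m N₁ N₂ c k = 0 := by
  refine poly_eq_zero_of_unitInterval _ fun u hu => ?_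
  rw [← splineFun_eq_localPoly m hm N₁ N₂ c k u hu]
  exact h _ ⟨by linarith [hu.1], by linarith [hu.2]⟩

/-! ### A coefficient criterion for nonseparability -/

/-- If two splines `a` and `b` have product zero, one of them vanishes on each unit interval; when
no `m` consecutive interior coefficients of the sum vanish, the vanishing factor cannot change
from one unit interval to the next. -/
lemma localPoly_propagate (m : ℕ) (N₁ N₂ : ℤ) (c a b : ℤ → ℝ)
    (hc : ∀ j, N₁ ≤ j → j ≤ N₂ - 2 → ∃ n, j - m + 1 ≤ n ∧ n ≤ j ∧ c n ≠ 0)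
    (hsum : ∀ n ∈ Finset.Icc (N₁ - m) (N₂ - 1), c n = a n + b n)
    (hprod : ∀ k, N₁ ≤ k → k ≤ N₂ - 1 →
      localPoly m N₁ N₂ a k = 0 ∨ localPoly m N₁ N₂ b k = 0)
    (h0 : localPoly m N₁ N₂ a N₁ = 0) :
    ∀ k, N₁ ≤ k → k ≤ N₂ - 1 → localPoly m N₁ N₂ a k = 0 := by
  intro k hk
  induction k, hk using Int.leInduction with
  | base => exact fun _ => h0
  | succ k hk ih =>
    intro hk₂
    rcases hprod (k + 1) (by lia) hk₂ with h | h
    · exact h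
    · exfalso
      obtain ⟨n, hn1, hn2, hn3⟩ := hc k hk (by lia)
      have ha := coeff_eq_zero_of_localPoly m N₁ N₂ a k hk (by lia) (ih (by lia)) n
        (Finset.mem_Icc.mpr ⟨by lia, hn2⟩)
      have hb := coeff_eq_zero_of_localPoly m N₁ N₂ b (k + 1) (by lia) hk₂ h n
        (Finset.mem_Icc.mpr ⟨by lia, by lia⟩)
      exact hn3 (by rw [hsum n (Finset.mem_Icc.mpr ⟨by lia, by lia⟩), ha, hb, add_zero])

/-- A spline without `m` consecutive vanishing interior coefficients is nonseparable; the two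
outermost coefficients, of index `N₁ - m` and `N₂ - 1`, are unrestricted. -/
lemma not_separable_of_coeff (m : ℕ) (hm : 1 ≤ m) (N₁ N₂ : ℤ) (hN : N₁ < N₂) (c : ℤ → ℝ)
    (hc : ∀ j, N₁ ≤ j → j ≤ N₂ - 2 → ∃ n, j - m + 1 ≤ n ∧ n ≤ j ∧ c n ≠ 0) :
    ¬ SeparableSpline m N₁ N₂ c := by
  rintro ⟨a, b, hsum, ⟨x, hx, hax⟩, ⟨y, hy, hby⟩, hprod⟩
  have hsum' : ∀ n ∈ Finset.Icc (N₁ - m) (N₂ - 1), c n = a n + b n := by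
    intro n hn
    rw [Finset.mem_Icc] at hn
    -- a unit interval on which the `n`-th shift is active
    obtain ⟨k, hk1, hk2, hk3, hk4⟩ : ∃ k, N₁ ≤ k ∧ k ≤ N₂ - 1 ∧ k - m ≤ n ∧ n ≤ k :=
      ⟨max N₁ n, by lia, by lia, by lia, by lia⟩
    have hz : localPoly m N₁ N₂ (c - (a + b)) k = 0 := by
      refine localPoly_eq_zero_of_splineFun m hm N₁ N₂ _ k fun z hz => ?_
      rw [splineFun_sub, splineFun_add, hsum z (mem_Icc_of_unit hk1 hk2 hz), sub_self]
    have := coeff_eq_zero_of_localPoly m N₁ N₂ _ k hk1 hk2 hz n (Finset.mem_Icc.mpr ⟨hk3, hk4⟩)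
    simpa [sub_eq_zero] using this
  have hprod' : ∀ k, N₁ ≤ k → k ≤ N₂ - 1 →
      localPoly m N₁ N₂ a k = 0 ∨ localPoly m N₁ N₂ b k = 0 := by
    intro k hk1 hk2
    rw [← mul_eq_zero]
    refine poly_eq_zero_of_unitInterval _ fun u hu => ?_
    rw [Polynomial.eval_mul, ← splineFun_eq_localPoly m hm N₁ N₂ a k u hu,
      ← splineFun_eq_localPoly m hm N₁ N₂ b k u hu]
    exact hprod _ (mem_Icc_of_unit hk1 hk2 ⟨by linarith [hu.1], by linarith [hu.2]⟩)
  rcases hprod' N₁ le_rfl (by lia) with h | h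
  · obtain ⟨k, hk1, hk2, hk⟩ := exists_unit_of_mem_Icc hN hx
    refine hax ?_
    rw [splineFun_eq_localPoly' m hm N₁ N₂ a k x hk,
      localPoly_propagate m N₁ N₂ c a b hc hsum' hprod' h k hk1 hk2, Polynomial.eval_zero]
  · obtain ⟨k, hk1, hk2, hk⟩ := exists_unit_of_mem_Icc hN hy
    refine hby ?_
    rw [splineFun_eq_localPoly' m hm N₁ N₂ b k y hk,
      localPoly_propagate m N₁ N₂ c b a hc (fun n hn => by rw [hsum' n hn, add_comm])
        (fun k h1 h2 => (hprod' k h1 h2).symm) h k hk1 hk2, Polynomial.eval_zero]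

/-! ### Ambiguous pairs -/

/-- At most `m` sample points in `[k, k + 1]` are annihilated by a nontrivial choice of the `m + 1`
coefficients active there (the other coefficients being `1`). As the shift `e` vanishes at none of the
points, the choice involves another coefficient than the `e`-th. -/
lemma exists_annihilator (m : ℕ) (hm : 1 ≤ m) (N₁ N₂ k e : ℤ) (hk₁ : N₁ ≤ k) (hk₂ : k ≤ N₂ - 1)
    (he : e ∈ Finset.Icc (k - m) k) (F : Finset ℝ) (hF : F.card ≤ m)
    (hFk : ∀ x ∈ F, x ∈ Set.Icc (k : ℝ) (k + 1)) (hFe : ∀ x ∈ F, bspline m (x - e) ≠ 0) :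
    ∃ g : ℤ → ℝ, (∀ n, n ∉ Finset.Icc (k - m) k → g n = 1) ∧
      (∃ n ∈ Finset.Icc (k - m) k, n ≠ e ∧ g n ≠ 0) ∧
      ∀ x ∈ F, splineFun m N₁ N₂ g x = 0 := by
  rcases F.eq_empty_or_nonempty with rfl | ⟨x₀, hx₀⟩
  · refine ⟨fun _ => 1, fun _ _ => rfl, ?_, by simp⟩
    rw [Finset.mem_Icc] at he
    by_cases h : e = k
    · exact ⟨k - 1, Finset.mem_Icc.mpr ⟨by lia, by lia⟩, by lia, one_ne_zero⟩
    · exact ⟨k, Finset.mem_Icc.mpr ⟨by lia, le_rfl⟩, by lia, one_ne_zero⟩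
  · -- `ext` extends a choice of the active coefficients by zero; `L` samples the result on `F`
    let ext : ((Finset.Icc (k - m) k : Finset ℤ) → ℝ) → ℤ → ℝ := fun v n =>
      if h : n ∈ Finset.Icc (k - m) k then v ⟨n, h⟩ else 0
    let L : ((Finset.Icc (k - m) k : Finset ℤ) → ℝ) →ₗ[ℝ] (F → ℝ) :=
      { toFun := fun v x => splineFun m N₁ N₂ (ext v) x
        map_add' := by
          intro v w
          ext x
          have : ext (v + w) = ext v + ext w := by
            ext n
            by_cases h : n ∈ Finset.Icc (k - m) k <;>
              simp only [ext, Pi.add_apply, h, dite_true, dite_false, add_zero]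
          simp only [this, splineFun_add, Pi.add_apply]
        map_smul' := by
          intro r v
          ext x
          have : ext (r • v) = fun n => r * ext v n := by
            ext n
            by_cases h : n ∈ Finset.Icc (k - m) k <;>
              simp only [ext, Pi.smul_apply, smul_eq_mul, h, dite_true, dite_false, mul_zero]
          simp only [this, splineFun, RingHom.id_apply, Pi.smul_apply, smul_eq_mul,
            Finset.mul_sum, mul_assoc] }
    have hker : LinearMap.ker L ≠ ⊥ := by
      refine LinearMap.ker_ne_bot_of_finrank_lt ?_
      rw [Module.finrank_fintype_fun_eq_card, Module.finrank_fintype_fun_eq_card,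
        Fintype.card_coe, Fintype.card_coe, Int.card_Icc]
      lia
    obtain ⟨v, hv, hv0⟩ := (Submodule.ne_bot_iff _).mp hker
    have hLv : ∀ x ∈ F, splineFun m N₁ N₂ (ext v) x = 0 := fun x hx =>
      congrFun (LinearMap.mem_ker.mp hv) ⟨x, hx⟩
    let g : ℤ → ℝ := fun n => if n ∈ Finset.Icc (k - m) k then ext v n else 1
    refine ⟨g, fun n hn => if_neg hn, ?_, fun x hx => ?_⟩
    · -- otherwise the kernel vector is a multiple of the shift `e`, which does not vanish at `x₀`
      by_contra! hcon
      have hext : ∀ n, n ≠ e → ext v n = 0 := by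
        intro n hn
        by_cases h : n ∈ Finset.Icc (k - m) k
        · have := hcon n h hn
          simpa only [g, if_pos h] using this
        · simp only [ext, dif_neg h]
      have h1 := hLv x₀ hx₀
      have he' : e ∈ Finset.Icc (N₁ - m) (N₂ - 1) := by
        rw [Finset.mem_Icc] at he ⊢
        lia
      rw [splineFun, Finset.sum_eq_single e (fun n _ hn => by rw [hext n hn, zero_mul])
        (fun h => absurd he' h)] at h1
      have h2 : ext v e = 0 := (mul_eq_zero.mp h1).resolve_right (hFe x₀ hx₀)
      refine hv0 (funext fun n => ?_)
      have h3 : ext v n = 0 := by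
        by_cases hn : (n : ℤ) = e
        · rw [hn, h2]
        · exact hext n hn
      exact (dif_pos n.2).symm.trans h3
    · rw [← hLv x hx, splineFun_eq_localPoly' m hm N₁ N₂ g k x (hFk x hx),
        splineFun_eq_localPoly' m hm N₁ N₂ (ext v) k x (hFk x hx)]
      congr 1
      refine Finset.sum_congr rfl fun n _ => ?_
      by_cases hn : n ∈ Finset.Icc (k - m) k
      · simp only [g, if_pos hn]
      · rw [Finset.mem_Icc, not_and_or, not_le, not_le] at hn
        rcases hn with hn | hn
        · rw [piece_of_gt m _ (by lia), mul_zero, mul_zero]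
        · rw [piece_of_neg m _ (by lia), mul_zero, mul_zero]

/-- Two nonseparable splines that differ by more than a sign on `[N₁, N₂]` have the same unsigned
samples on `E`. -/
def HasAmbiguousPair (m : ℕ) (N₁ N₂ : ℤ) (E : Finset ℝ) : Prop :=
  ∃ c₁ c₂ : ℤ → ℝ, ¬ SeparableSpline m N₁ N₂ c₁ ∧ ¬ SeparableSpline m N₁ N₂ c₂ ∧
    (∃ x ∈ Set.Icc (N₁ : ℝ) N₂, splineFun m N₁ N₂ c₁ x ≠ splineFun m N₁ N₂ c₂ x) ∧
    (∃ x ∈ Set.Icc (N₁ : ℝ) N₂, splineFun m N₁ N₂ c₁ x ≠ -splineFun m N₁ N₂ c₂ x) ∧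
    (∀ x ∈ E, |splineFun m N₁ N₂ c₁ x| = |splineFun m N₁ N₂ c₂ x|)

/-- The splines `g + h` and `g - h`, where `h` is the outermost shift at one end (so it vanishes at
all samples outside the end interval) and `g` annihilates the samples in the end interval. -/
lemma exists_pair (m : ℕ) (hm : 1 ≤ m) (N₁ N₂ : ℤ) (hN : N₁ < N₂) (k e : ℤ)
    (hke : (k = N₁ ∧ e = N₁ - m) ∨ (k = N₂ - 1 ∧ e = N₂ - 1)) (E F : Finset ℝ)
    (hF : F.card ≤ m)
    (hFk : ∀ x ∈ F, x ∈ Set.Icc (k : ℝ) (k + 1)) (hFe : ∀ x ∈ F, bspline m (x - e) ≠ 0)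
    (hEe : ∀ x ∈ E, x ∉ F → bspline m (x - e) = 0) :
    HasAmbiguousPair m N₁ N₂ E := by
  have hk₁ : N₁ ≤ k := by lia
  have hk₂ : k ≤ N₂ - 1 := by lia
  have he : e ∈ Finset.Icc (k - m) k := by rw [Finset.mem_Icc]; lia
  have he' : e ∈ Finset.Icc (N₁ - m) (N₂ - 1) := by rw [Finset.mem_Icc]; lia
  obtain ⟨g, hg1, ⟨n₀, hn₀, hn₀e, hgn₀⟩, hgF⟩ :=
    exists_annihilator m hm N₁ N₂ k e hk₁ hk₂ he F hF hFk hFe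
  have hgap : ∀ j, N₁ ≤ j → j ≤ N₂ - 2 →
      ∃ n, j - m + 1 ≤ n ∧ n ≤ j ∧ n ≠ e ∧ g n ≠ 0 := by
    intro j hj1 hj2
    rw [Finset.mem_Icc] at hn₀
    have hone : ∀ n, (n < k - m ∨ k < n) → n ≠ e ∧ g n ≠ 0 := by
      intro n hn
      refine ⟨by rw [Finset.mem_Icc] at he; lia, ?_⟩
      rw [hg1 n (by rw [Finset.mem_Icc]; lia)]
      exact one_ne_zero
    rcases hke with ⟨rfl, rfl⟩ | ⟨rfl, rfl⟩
    · rcases hj1.eq_or_lt with rfl | hlt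
      · exact ⟨n₀, by lia, by lia, hn₀e, hgn₀⟩
      · exact ⟨j, by lia, le_rfl, hone j (Or.inr hlt)⟩
    · rcases hj2.eq_or_lt with rfl | hlt
      · exact ⟨n₀, by lia, by lia, hn₀e, hgn₀⟩
      · exact ⟨j - m + 1, le_rfl, by lia, hone _ (Or.inl (by lia))⟩
  -- a spline with a nonzero coefficient active on `[k, k + 1]` is not identically zero
  have hne : ∀ (a : ℤ → ℝ) (n : ℤ), n ∈ Finset.Icc (k - m) k → a n ≠ 0 →
      ∃ x ∈ Set.Icc (N₁ : ℝ) N₂, splineFun m N₁ N₂ a x ≠ 0 := by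
    intro a n hn han
    by_contra! hcon
    exact han (coeff_eq_zero_of_localPoly m N₁ N₂ a k hk₁ hk₂
      (localPoly_eq_zero_of_splineFun m hm N₁ N₂ a k fun x hx =>
        hcon x (mem_Icc_of_unit hk₁ hk₂ hx)) n hn)
  refine ⟨g + Pi.single e 1, g - Pi.single e 1, ?_, ?_, ?_, ?_, ?_⟩
  · refine not_separable_of_coeff m hm N₁ N₂ hN _ fun j hj1 hj2 => ?_
    obtain ⟨n, h1, h2, h3, h4⟩ := hgap j hj1 hj2
    exact ⟨n, h1, h2, by simpa [h3] using h4⟩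
  · refine not_separable_of_coeff m hm N₁ N₂ hN _ fun j hj1 hj2 => ?_
    obtain ⟨n, h1, h2, h3, h4⟩ := hgap j hj1 hj2
    exact ⟨n, h1, h2, by simpa [h3] using h4⟩
  · obtain ⟨x, hx, hx0⟩ := hne (Pi.single e 1) e he (by simp)
    refine ⟨x, hx, fun h => hx0 ?_⟩
    rw [splineFun_add, splineFun_sub] at h
    linarith
  · obtain ⟨x, hx, hx0⟩ := hne g n₀ hn₀ hgn₀
    refine ⟨x, hx, fun h => hx0 ?_⟩
    rw [splineFun_add, splineFun_sub] at h
    linarith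
  · intro x hx
    rw [splineFun_add, splineFun_sub, splineFun_single m N₁ N₂ e he']
    by_cases hxF : x ∈ F
    · rw [hgF x hxF, zero_add, zero_sub, abs_neg]
    · rw [hEe x hx hxF, add_zero, sub_zero]

/-- a local phaseless sampling set has at least `m+1` points in the first
and last unit intervals; in particular, at most `m` points in `[N₁, N₁+1)` would yield
two nonseparable functions, not equal up to a sign, with equal unsigned samples on `E`. -/
theorem stmt_17 (m : ℕ) (hm : 1 ≤ m) (N₁ N₂ : ℤ) (hN : N₁ < N₂) (E : Finset ℝ)
    (hPS : IsPhaselessSamplingSet m N₁ N₂ E) :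
    ((m : ℤ) + 1 ≤ (((E : Set ℝ) ∩ Set.Ico (N₁ : ℝ) ((N₁ : ℝ) + 1)).ncard : ℤ) ∧
      (m : ℤ) + 1 ≤ (((E : Set ℝ) ∩ Set.Ioc ((N₂ : ℝ) - 1) (N₂ : ℝ)).ncard : ℤ)) ∧
    ((((E : Set ℝ) ∩ Set.Ico (N₁ : ℝ) ((N₁ : ℝ) + 1)).ncard : ℤ) ≤ m →
      ∃ c₁ c₂ : ℤ → ℝ, ¬ SeparableSpline m N₁ N₂ c₁ ∧ ¬ SeparableSpline m N₁ N₂ c₂ ∧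
        (∃ x ∈ Set.Icc (N₁ : ℝ) N₂, splineFun m N₁ N₂ c₁ x ≠ splineFun m N₁ N₂ c₂ x) ∧
        (∃ x ∈ Set.Icc (N₁ : ℝ) N₂, splineFun m N₁ N₂ c₁ x ≠ -splineFun m N₁ N₂ c₂ x) ∧
        (∀ x ∈ E, |splineFun m N₁ N₂ c₁ x| = |splineFun m N₁ N₂ c₂ x|)) := by
  have hsub := hPS.1
  have left : (((E : Set ℝ) ∩ Set.Ico (N₁ : ℝ) ((N₁ : ℝ) + 1)).ncard : ℤ) ≤ m →
      HasAmbiguousPair m N₁ N₂ E := by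
    intro hcard
    classical
    have hF : (E : Set ℝ) ∩ Set.Ico (N₁ : ℝ) ((N₁ : ℝ) + 1) =
        (E.filter fun x => x ∈ Set.Ico (N₁ : ℝ) ((N₁ : ℝ) + 1) : Finset ℝ) := by
      ext x; simp
    rw [hF, Set.ncard_coe_finset] at hcard
    refine exists_pair m hm N₁ N₂ hN N₁ (N₁ - m) (Or.inl ⟨rfl, rfl⟩) E _
      (Int.ofNat_le.mp hcard) ?_ ?_ ?_
    · intro x hx
      have := (Finset.mem_filter.mp hx).2
      exact ⟨this.1, this.2.le⟩
    · intro x hx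
      have := (Finset.mem_filter.mp hx).2
      refine bspline_ne_zero_last m hm _ ?_
      push_cast
      exact ⟨by linarith [this.1], by linarith [this.2]⟩
    · intro x hx hxF
      refine bspline_of_ge m hm _ ?_
      have h1 := (hsub hx).1
      have h2 : ¬ x < (N₁ : ℝ) + 1 := fun h => hxF (Finset.mem_filter.mpr ⟨hx, h1, h⟩)
      push_cast
      linarith
  have right : (((E : Set ℝ) ∩ Set.Ioc ((N₂ : ℝ) - 1) (N₂ : ℝ)).ncard : ℤ) ≤ m →
      HasAmbiguousPair m N₁ N₂ E := by
    intro hcard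
    classical
    have hF : (E : Set ℝ) ∩ Set.Ioc ((N₂ : ℝ) - 1) (N₂ : ℝ) =
        (E.filter fun x => x ∈ Set.Ioc ((N₂ : ℝ) - 1) (N₂ : ℝ) : Finset ℝ) := by
      ext x; simp
    rw [hF, Set.ncard_coe_finset] at hcard
    refine exists_pair m hm N₁ N₂ hN (N₂ - 1) (N₂ - 1) (Or.inr ⟨rfl, rfl⟩) E _
      (Int.ofNat_le.mp hcard) ?_ ?_ ?_
    · intro x hx
      have := (Finset.mem_filter.mp hx).2
      push_cast
      exact ⟨this.1.le, by linarith [this.2]⟩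
    · intro x hx
      have := (Finset.mem_filter.mp hx).2
      refine bspline_ne_zero_first m hm _ ?_
      push_cast
      exact ⟨by linarith [this.1], by linarith [this.2]⟩
    · intro x hx hxF
      refine bspline_of_nonpos m hm _ ?_
      have h1 := (hsub hx).2
      have h2 : ¬ (N₂ : ℝ) - 1 < x := fun h => hxF (Finset.mem_filter.mpr ⟨hx, h, h1⟩)
      push_cast
      linarith
  have contra : ¬ HasAmbiguousPair m N₁ N₂ E := by
    rintro ⟨c₁, c₂, hs, -, ⟨x, hx, hx'⟩, ⟨y, hy, hy'⟩, habs⟩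
    rcases hPS.2 c₁ c₂ hs habs with h | h
    · exact hx' (h x hx).symm
    · exact hy' (by rw [h y hy, neg_neg])
  refine ⟨⟨?_, ?_⟩, left⟩
  · by_contra hlt
    exact contra (left (by lia))
  · by_contra hlt
    exact contra (right (by lia))
end
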